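/- Let N be a real number with N > 1, let γ = arcsin(1/√N), let G be the 2×2 real rotation matrix ![![cos 2γ, −sin 2γ], ![sin 2γ, cos 2γ]], let v = ![cos γ, sin γ] and ρ₀ = v vᵀ, and let Π = ![![1,0],![0,0]]. Let 0 < p ≤ 1, define the ℝ-linear map E on Matrix (Fin 2) (Fin 2) ℝ by E(ρ) = G ρ Gᵀ, and set Eσ = p · E ∘ (id − (1−p)·E)⁻¹ (the map id − (1−p)E being bijective). Define Lσ(ρ) = Π (Eσ(ρ)) Π. Then id − Lσ is bijective and (1/p) · trace((id − Lσ)⁻¹(Π ρ₀ Π)) = (N²p² − 16Np + 16N + 16p − 16) / (4Np(2 − p)). -/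

import Mathlib

open Matrix

/-!
Conjugation by the rotation `R(θ)` is an isometry, so `id - (1 - p) E` is bijective as soon as
`|1 - p| ≠ 1`. It fixes the identity and carries the reflection `S(φ)` to `S(φ + 2θ)`. Since
`Π = (1 + S(0)) / 2`, the value `Eσ Π` follows from summing the geometric series of `E` on the
progression of angles, where `S(φ + α) + S(φ - α) = 2 cos α • S(φ)` plays the role of the
characteristic equation. As `Π` has rank one, `Lσ ρ = (Eσ ρ)₀₀ • Π`, whence
`(id - Lσ)⁻¹ Π = Π / (1 - (Eσ Π)₀₀)`.
-/

section Conjugation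

theorem injective_id_sub_smul_of_norm_map {𝕜 V : Type*} [NormedField 𝕜] [NormedAddCommGroup V]
    [NormedSpace 𝕜 V] {T : V →ₗ[𝕜] V} (hT : ∀ x, ‖T x‖ = ‖x‖) {q : 𝕜} (hq : ‖q‖ ≠ 1) :
    Function.Injective (LinearMap.id - q • T : V →ₗ[𝕜] V) := by
  rw [injective_iff_map_eq_zero]
  intro x hx
  have hfix : x = q • T x := sub_eq_zero.mp hx
  have hnorm : ‖x‖ = ‖q‖ * ‖x‖ := by
    conv_lhs => rw [hfix, norm_smul, hT]
  by_contra hx0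
  exact hq (mul_right_cancel₀ (norm_ne_zero_iff.mpr hx0) (by rw [one_mul, ← hnorm]))

theorem bijective_id_sub_smul_of_unitary_conj {𝕜 n : Type*} [RCLike 𝕜] [Fintype n]
    [DecidableEq n] {U : Matrix n n 𝕜} (hU : U ∈ unitaryGroup n 𝕜)
    {E : Matrix n n 𝕜 →ₗ[𝕜] Matrix n n 𝕜} (hE : ∀ ρ, E ρ = U * ρ * star U) {q : 𝕜} (hq : ‖q‖ ≠ 1) :
    Function.Bijective (LinearMap.id - q • E : Matrix n n 𝕜 →ₗ[𝕜] Matrix n n 𝕜) := by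
  open scoped Matrix.Norms.L2Operator in
  have hnorm : ∀ ρ, ‖E ρ‖ = ‖ρ‖ := fun ρ => by
    rw [hE, CStarRing.norm_mul_mem_unitary _ (Unitary.star_mem hU),
      CStarRing.norm_mem_unitary_mul _ hU]
  have hinj := injective_id_sub_smul_of_norm_map hnorm hq
  exact ⟨hinj, LinearMap.injective_iff_surjective.mp hinj⟩

end Conjugation

section GeometricMixture

variable {K V : Type*} [CommRing K] [AddCommGroup V] [Module K V] {p : K} {T S : V →ₗ[K] V}

/-- `S` is the mixture `∑ₖ p (1 - p)ᵏ Tᵏ⁺¹ = p T (id - (1 - p) T)⁻¹` of the iterates of `T`, the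
number of iterations being geometrically distributed with parameter `p`. The inverse is multiplied
out, so `S` is determined by `T` only if `id - (1 - p) T` is surjective. -/
def IsGeometricMixture (p : K) (T S : V →ₗ[K] V) : Prop :=
  S ∘ₗ (LinearMap.id - (1 - p) • T) = p • T

theorem IsGeometricMixture.apply_sub_smul (hS : IsGeometricMixture p T S) (x : V) :
    S (x - (1 - p) • T x) = p • T x :=
  LinearMap.congr_fun hS x

theorem IsGeometricMixture.smul_apply_of_fixed (hS : IsGeometricMixture p T S) {x : V}
    (hx : T x = x) : p • S x = p • x := by
  have hpre : x - (1 - p) • x = p • x := by module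
  simpa only [hx, hpre, map_smul] using hS.apply_sub_smul x

-- If `T` shifts a solution of `xₖ₊₁ + xₖ₋₁ = t xₖ`, then `id - q T` maps `x₁ - q x₀` to a
-- multiple of `x₁`.
theorem IsGeometricMixture.smul_apply_of_recurrence (hS : IsGeometricMixture p T S)
    {x₀ x₁ x₂ : V} (h₁ : T x₀ = x₁) (h₂ : T x₁ = x₂) {t : K} (hrec : x₂ + x₀ = t • x₁) :
    (1 - (1 - p) * t + (1 - p) ^ 2) • S x₁ = p • (x₂ - (1 - p) • x₁) := by
  have hT : T (x₁ - (1 - p) • x₀) = x₂ - (1 - p) • x₁ := by rw [map_sub, map_smul, h₁, h₂]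
  have hpre : x₁ - (1 - p) • x₀ - (1 - p) • (x₂ - (1 - p) • x₁) =
      (1 - (1 - p) * t + (1 - p) ^ 2) • x₁ := by
    linear_combination (norm := module) (-(1 - p)) • hrec
  have h := hS.apply_sub_smul (x₁ - (1 - p) • x₀)
  rwa [hT, hpre, map_smul] at h

end GeometricMixture

section RankOne

theorem bijective_id_sub_smulRight {R V : Type*} [CommRing R] [AddCommGroup V] [Module R V]
    {f : Module.Dual R V} {e : V} (hfe : IsUnit (1 - f e)) :
    Function.Bijective (LinearMap.id - f.smulRight e : V →ₗ[R] V) := by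
  have hunit : IsUnit (1 + f (-e)) := by
    rwa [map_neg, ← sub_eq_add_neg]
  have heq : (LinearMap.id - f.smulRight e : V →ₗ[R] V) = LinearEquiv.dilatransvection hunit := by
    ext x
    rw [LinearEquiv.coe_coe, LinearEquiv.dilatransvection.apply, smul_neg, ← sub_eq_add_neg]
    rfl
  rw [heq]
  exact (LinearEquiv.dilatransvection hunit).bijective

theorem eq_smul_of_id_sub_smulRight_apply_eq {K V : Type*} [Field K] [AddCommGroup V]
    [Module K V] {f : Module.Dual K V} {e : V} (hfe : f e ≠ 1) {a : K} {x : V}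
    (hx : (LinearMap.id - f.smulRight e : V →ₗ[K] V) x = a • e) : x = (a / (1 - f e)) • e := by
  have hne : 1 - f e ≠ 0 := sub_ne_zero.mpr hfe.symm
  apply (bijective_id_sub_smulRight hne.isUnit).injective
  rw [hx, LinearMap.sub_apply, LinearMap.id_apply, LinearMap.smulRight_apply, map_smul,
    smul_eq_mul, ← sub_smul, ← mul_one_sub, div_mul_cancel₀ a hne]

end RankOne

section Compression

variable {n : Type*} [Fintype n] [DecidableEq n] {i : n}

theorem single_one_mul_mul_single_one {R : Type*} [Semiring R] (A : Matrix n n R) :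
    Matrix.single i i 1 * A * Matrix.single i i 1 = A i i • Matrix.single i i (1 : R) := by
  rw [Matrix.single_mul_mul_single, Matrix.smul_single, one_mul, mul_one, smul_eq_mul, mul_one]

theorem compression_eq_smulRight {R : Type*} [CommSemiring R]
    {S L : Matrix n n R →ₗ[R] Matrix n n R}
    (hL : ∀ ρ, L ρ = Matrix.single i i 1 * S ρ * Matrix.single i i 1) :
    L = (Matrix.entryLinearMap R R i i ∘ₗ S).smulRight (Matrix.single i i 1) :=
  LinearMap.ext fun ρ => by
    rw [hL, single_one_mul_mul_single_one]
    rfl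

variable {K : Type*} [Field K] {S L : Matrix n n K →ₗ[K] Matrix n n K}

theorem bijective_id_sub_compression
    (hL : ∀ ρ, L ρ = Matrix.single i i 1 * S ρ * Matrix.single i i 1)
    (hS : S (Matrix.single i i 1) i i ≠ 1) :
    Function.Bijective (LinearMap.id - L : Matrix n n K →ₗ[K] Matrix n n K) := by
  rw [compression_eq_smulRight hL]
  exact bijective_id_sub_smulRight (sub_ne_zero.mpr hS.symm).isUnit

theorem trace_eq_of_id_sub_compression_apply_eq
    (hL : ∀ ρ, L ρ = Matrix.single i i 1 * S ρ * Matrix.single i i 1)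
    (hS : S (Matrix.single i i 1) i i ≠ 1) {ρ w : Matrix n n K}
    (hw : (LinearMap.id - L : Matrix n n K →ₗ[K] Matrix n n K) w =
      Matrix.single i i 1 * ρ * Matrix.single i i 1) :
    w.trace = ρ i i / (1 - S (Matrix.single i i 1) i i) := by
  rw [single_one_mul_mul_single_one, compression_eq_smulRight hL] at hw
  have hw' := eq_smul_of_id_sub_smulRight_apply_eq hS hw
  rw [hw', Matrix.trace_smul, Matrix.trace_single_eq_same, smul_eq_mul, mul_one]
  rfl

end Compression

section Plane

/-- The matrix of the rotation of the plane by the angle `θ`; the Grover iterate is the rotation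
by `2γ`. -/
noncomputable def rotationMatrix (θ : ℝ) : Matrix (Fin 2) (Fin 2) ℝ :=
  !![Real.cos θ, -Real.sin θ; Real.sin θ, Real.cos θ]

/-- The matrix of the reflection of the plane across the line at angle `φ / 2`. Together with the
identity matrix these matrices span the symmetric matrices. -/
noncomputable def reflectionMatrix (φ : ℝ) : Matrix (Fin 2) (Fin 2) ℝ :=
  !![Real.cos φ, Real.sin φ; Real.sin φ, -Real.cos φ]

theorem rotationMatrix_mem_orthogonalGroup (θ : ℝ) :
    rotationMatrix θ ∈ orthogonalGroup (Fin 2) ℝ := by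
  have h : rotationMatrix θ ∈ specialOrthogonalGroup (Fin 2) ℝ := by
    rw [mem_specialOrthogonalGroup_fin_two_iff]
    simp [rotationMatrix]
  exact (mem_specialOrthogonalGroup_iff.mp h).1

theorem rotationMatrix_mul_reflectionMatrix_mul_transpose (θ φ : ℝ) :
    rotationMatrix θ * reflectionMatrix φ * (rotationMatrix θ)ᵀ =
      reflectionMatrix (φ + 2 * θ) := by
  ext i j
  fin_cases i <;> fin_cases j <;>
    simp [rotationMatrix, reflectionMatrix, Matrix.mul_apply, Fin.sum_univ_two, Real.cos_add,
      Real.sin_add, Real.cos_two_mul', Real.sin_two_mul] <;>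
    ring

theorem reflectionMatrix_add_add_reflectionMatrix_sub (φ α : ℝ) :
    reflectionMatrix (φ + α) + reflectionMatrix (φ - α) =
      (2 * Real.cos α) • reflectionMatrix φ := by
  ext i j
  fin_cases i <;> fin_cases j <;>
    simp [reflectionMatrix, Real.cos_add, Real.sin_add, Real.cos_sub, Real.sin_sub] <;>
    ring

theorem single_zero_zero_one_eq_of {R : Type*} [Zero R] [One R] :
    (Matrix.single 0 0 1 : Matrix (Fin 2) (Fin 2) R) = !![1, 0; 0, 0] := by
  ext i j
  fin_cases i <;> fin_cases j <;> rfl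

theorem single_zero_zero_one_eq_smul_one_add_reflectionMatrix :
    Matrix.single 0 0 1 = (1 / 2 : ℝ) • (1 + reflectionMatrix 0) := by
  ext i j
  fin_cases i <;> fin_cases j <;> norm_num [reflectionMatrix, Matrix.single_apply]

theorem one_sub_two_mul_mul_cos_add_sq_ne_zero {q : ℝ} (hq : |q| ≠ 1) (α : ℝ) :
    1 - 2 * q * Real.cos α + q ^ 2 ≠ 0 := by
  intro h
  have hsum : (q - Real.cos α) ^ 2 + Real.sin α ^ 2 = 0 := by
    linear_combination h + Real.sin_sq_add_cos_sq α
  have hsin : Real.sin α ^ 2 = 0 := by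
    linarith [sq_nonneg (q - Real.cos α), sq_nonneg (Real.sin α)]
  have hcos : q - Real.cos α = 0 := by
    rwa [hsin, add_zero, sq_eq_zero_iff] at hsum
  have hq2 : q ^ 2 = 1 := by
    rw [sub_eq_zero.mp hcos, Real.cos_sq', hsin, sub_zero]
  exact hq (by rwa [← sq_eq_sq₀ (abs_nonneg q) zero_le_one, sq_abs, one_pow])

end Plane

section RotationHitting

variable {θ p : ℝ} {E Eσ : Matrix (Fin 2) (Fin 2) ℝ →ₗ[ℝ] Matrix (Fin 2) (Fin 2) ℝ}

theorem bijective_id_sub_smul_of_rotationMatrix_conj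
    (hE : ∀ ρ, E ρ = rotationMatrix θ * ρ * (rotationMatrix θ)ᵀ) {q : ℝ} (hq : |q| ≠ 1) :
    Function.Bijective (LinearMap.id - q • E :
      Matrix (Fin 2) (Fin 2) ℝ →ₗ[ℝ] Matrix (Fin 2) (Fin 2) ℝ) :=
  bijective_id_sub_smul_of_unitary_conj (rotationMatrix_mem_orthogonalGroup θ)
    (fun ρ => by rw [hE, star_eq_conjTranspose, conjTranspose_eq_transpose_of_trivial]) hq

theorem abs_one_sub_ne_one (hp0 : p ≠ 0) (hp2 : p ≠ 2) : |1 - p| ≠ 1 := by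
  intro h
  rcases eq_or_eq_neg_of_abs_eq h with h | h
  · exact hp0 (by linarith)
  · exact hp2 (by linarith)

theorem geometricMixture_one (hp0 : p ≠ 0)
    (hE : ∀ ρ, E ρ = rotationMatrix θ * ρ * (rotationMatrix θ)ᵀ)
    (hEσ : IsGeometricMixture p E Eσ) : Eσ 1 = 1 := by
  have hfix : E 1 = 1 := by
    rw [hE, mul_one]
    exact (mem_orthogonalGroup_iff _ _).mp (rotationMatrix_mem_orthogonalGroup θ)
  exact smul_right_injective _ hp0 (hEσ.smul_apply_of_fixed hfix)

theorem smul_geometricMixture_reflectionMatrix (φ : ℝ)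
    (hE : ∀ ρ, E ρ = rotationMatrix θ * ρ * (rotationMatrix θ)ᵀ)
    (hEσ : IsGeometricMixture p E Eσ) :
    (1 - (1 - p) * (2 * Real.cos (2 * θ)) + (1 - p) ^ 2) • Eσ (reflectionMatrix φ) =
      p • (reflectionMatrix (φ + 2 * θ) - (1 - p) • reflectionMatrix φ) := by
  have hshift : ∀ ψ, E (reflectionMatrix ψ) = reflectionMatrix (ψ + 2 * θ) := fun ψ => by
    rw [hE, rotationMatrix_mul_reflectionMatrix_mul_transpose]
  refine hEσ.smul_apply_of_recurrence ?_ (hshift φ)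
    (reflectionMatrix_add_add_reflectionMatrix_sub φ (2 * θ))
  rw [hshift, sub_add_cancel]

theorem one_sub_geometricMixture_single_apply (hp0 : p ≠ 0) (hp2 : p ≠ 2)
    (hE : ∀ ρ, E ρ = rotationMatrix θ * ρ * (rotationMatrix θ)ᵀ)
    (hEσ : IsGeometricMixture p E Eσ) :
    1 - Eσ (Matrix.single 0 0 1) 0 0 =
      (2 - p) * (1 - Real.cos (2 * θ)) /
        (2 * (1 - 2 * (1 - p) * Real.cos (2 * θ) + (1 - p) ^ 2)) := by
  have hD := one_sub_two_mul_mul_cos_add_sq_ne_zero (abs_one_sub_ne_one hp0 hp2) (2 * θ)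
  have hrefl := congrFun₂ (smul_geometricMixture_reflectionMatrix 0 hE hEσ) 0 0
  simp only [reflectionMatrix, Matrix.smul_apply, Matrix.sub_apply, Matrix.of_apply,
    Matrix.cons_val_zero, Matrix.cons_val', smul_eq_mul, zero_add, Real.cos_zero] at hrefl
  rw [single_zero_zero_one_eq_smul_one_add_reflectionMatrix, map_smul, map_add,
    geometricMixture_one hp0 hE hEσ, Matrix.smul_apply, Matrix.add_apply, Matrix.one_apply_eq,
    smul_eq_mul, eq_div_iff (mul_ne_zero two_ne_zero hD)]
  simp only [reflectionMatrix, Real.cos_zero]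
  linear_combination -hrefl

theorem geometricMixture_single_apply_ne_one (hp0 : p ≠ 0) (hp2 : p ≠ 2)
    (hθ : Real.cos (2 * θ) ≠ 1)
    (hE : ∀ ρ, E ρ = rotationMatrix θ * ρ * (rotationMatrix θ)ᵀ)
    (hEσ : IsGeometricMixture p E Eσ) :
    Eσ (Matrix.single 0 0 1) 0 0 ≠ 1 := by
  have hD := one_sub_two_mul_mul_cos_add_sq_ne_zero (abs_one_sub_ne_one hp0 hp2) (2 * θ)
  refine (sub_ne_zero.mp ?_).symm
  rw [one_sub_geometricMixture_single_apply hp0 hp2 hE hEσ]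
  exact div_ne_zero (mul_ne_zero (sub_ne_zero.mpr hp2.symm) (sub_ne_zero.mpr hθ.symm))
    (mul_ne_zero two_ne_zero hD)

end RotationHitting

section Grover

theorem sin_arcsin_one_div_sqrt_sq {N : ℝ} (hN : 1 ≤ N) :
    Real.sin (Real.arcsin (1 / √N)) ^ 2 = 1 / N := by
  have hnonneg : 0 ≤ 1 / √N := by positivity
  have hle : 1 / √N ≤ 1 := div_le_one_of_le₀ (Real.one_le_sqrt.mpr hN) (Real.sqrt_nonneg N)
  rw [Real.sin_arcsin (by linarith) hle, div_pow, Real.sq_sqrt (by linarith), one_pow]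

theorem cos_two_mul_two_mul_eq (γ : ℝ) :
    Real.cos (2 * (2 * γ)) = 1 - 8 * Real.sin γ ^ 2 * Real.cos γ ^ 2 := by
  rw [Real.cos_two_mul, Real.cos_sq', Real.sin_two_mul]
  ring

theorem grover_generalizedHittingTime_geometric_general
    {N γ p : ℝ} (hN : 1 < N) (hγ : γ = Real.arcsin (1 / √N)) (hp0 : p ≠ 0) (hp2 : p ≠ 2)
    {E : Matrix (Fin 2) (Fin 2) ℝ →ₗ[ℝ] Matrix (Fin 2) (Fin 2) ℝ}
    (hE : ∀ ρ, E ρ = rotationMatrix (2 * γ) * ρ * (rotationMatrix (2 * γ))ᵀ) :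
    Function.Bijective
        (LinearMap.id - (1 - p) • E :
          Matrix (Fin 2) (Fin 2) ℝ →ₗ[ℝ] Matrix (Fin 2) (Fin 2) ℝ) ∧
      ∀ Eσ : Matrix (Fin 2) (Fin 2) ℝ →ₗ[ℝ] Matrix (Fin 2) (Fin 2) ℝ,
        IsGeometricMixture p E Eσ →
        ∀ Lσ : Matrix (Fin 2) (Fin 2) ℝ →ₗ[ℝ] Matrix (Fin 2) (Fin 2) ℝ,
          (∀ ρ, Lσ ρ = Matrix.single 0 0 1 * Eσ ρ * Matrix.single 0 0 1) →
          Function.Bijective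
              (LinearMap.id - Lσ :
                Matrix (Fin 2) (Fin 2) ℝ →ₗ[ℝ] Matrix (Fin 2) (Fin 2) ℝ) ∧
            ∀ w : Matrix (Fin 2) (Fin 2) ℝ,
              (LinearMap.id - Lσ :
                  Matrix (Fin 2) (Fin 2) ℝ →ₗ[ℝ] Matrix (Fin 2) (Fin 2) ℝ) w =
                  Matrix.single 0 0 1 *
                    vecMulVec ![Real.cos γ, Real.sin γ] ![Real.cos γ, Real.sin γ] *
                    Matrix.single 0 0 1 →
                (1 / p) * w.trace =
                  (N ^ 2 * p ^ 2 - 16 * N * p + 16 * N + 16 * p - 16) /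
                    (4 * N * p * (2 - p)) := by
  have hN0 : N ≠ 0 := by linarith
  have hN1 : N - 1 ≠ 0 := by linarith
  have hsin : Real.sin γ ^ 2 = 1 / N := hγ ▸ sin_arcsin_one_div_sqrt_sq hN.le
  have hcos : Real.cos γ ^ 2 = (N - 1) / N := by
    rw [Real.cos_sq', hsin, one_sub_div hN0]
  have hcos4 : Real.cos (2 * (2 * γ)) = 1 - 8 * (1 / N) * ((N - 1) / N) := by
    rw [cos_two_mul_two_mul_eq, hsin, hcos]
  have hcos4_ne : Real.cos (2 * (2 * γ)) ≠ 1 := by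
    rw [hcos4, Ne, sub_eq_self]
    positivity
  refine ⟨bijective_id_sub_smul_of_rotationMatrix_conj hE (abs_one_sub_ne_one hp0 hp2), ?_⟩
  intro Eσ hEσ Lσ hLσ
  have hreturn := geometricMixture_single_apply_ne_one hp0 hp2 hcos4_ne hE hEσ
  refine ⟨bijective_id_sub_compression hLσ hreturn, fun w hw => ?_⟩
  have hinit : vecMulVec ![Real.cos γ, Real.sin γ] ![Real.cos γ, Real.sin γ] 0 0 = (N - 1) / N := by
    rw [← hcos, sq]
    rfl
  rw [trace_eq_of_id_sub_compression_apply_eq hLσ hreturn hw,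
    one_sub_geometricMixture_single_apply hp0 hp2 hE hEσ, hinit, hcos4]
  have hp2' : 2 - p ≠ 0 := sub_ne_zero.mpr hp2.symm
  field_simp
  ring

end Grover

/-- Theorem 4 (exact form): the generalized hitting time of Grover's algorithm with
geometric measurement probability `p` equals
`(N²p² − 16Np + 16N + 16p − 16) / (4Np(2 − p))`. Here `Eσ = pE ∘ (id − (1−p)E)⁻¹`
(characterized by `Eσ ∘ (id − (1−p)E) = pE`, the map `id − (1−p)E` being bijective),
`Lσ ρ = Π (Eσ ρ) Π`, and the hitting time is `(1/p)·trace ((id − Lσ)⁻¹ (Π ρ₀ Π))`. -/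
theorem grover_generalizedHittingTime_geometric
    (N : ℝ) (hN : 1 < N)
    (γ : ℝ) (hγ : γ = Real.arcsin (1 / Real.sqrt N))
    (G : Matrix (Fin 2) (Fin 2) ℝ)
    (hG : G = !![Real.cos (2 * γ), -Real.sin (2 * γ);
                 Real.sin (2 * γ), Real.cos (2 * γ)])
    (v : Fin 2 → ℝ) (hv : v = ![Real.cos γ, Real.sin γ])
    (ρ₀ : Matrix (Fin 2) (Fin 2) ℝ) (hρ₀ : ρ₀ = Matrix.vecMulVec v v)
    (Pj : Matrix (Fin 2) (Fin 2) ℝ) (hPj : Pj = !![1, 0; 0, 0])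
    (p : ℝ) (hp0 : 0 < p) (hp1 : p ≤ 1)
    (E : Matrix (Fin 2) (Fin 2) ℝ →ₗ[ℝ] Matrix (Fin 2) (Fin 2) ℝ)
    (hE : ∀ ρ, E ρ = G * ρ * Gᵀ) :
    Function.Bijective
        (LinearMap.id - (1 - p) • E :
          Matrix (Fin 2) (Fin 2) ℝ →ₗ[ℝ] Matrix (Fin 2) (Fin 2) ℝ) ∧
      ∀ Eσ : Matrix (Fin 2) (Fin 2) ℝ →ₗ[ℝ] Matrix (Fin 2) (Fin 2) ℝ,
        Eσ ∘ₗ (LinearMap.id - (1 - p) • E :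
            Matrix (Fin 2) (Fin 2) ℝ →ₗ[ℝ] Matrix (Fin 2) (Fin 2) ℝ) = p • E →
        ∀ Lσ : Matrix (Fin 2) (Fin 2) ℝ →ₗ[ℝ] Matrix (Fin 2) (Fin 2) ℝ,
          (∀ ρ, Lσ ρ = Pj * (Eσ ρ) * Pj) →
          Function.Bijective
              (LinearMap.id - Lσ :
                Matrix (Fin 2) (Fin 2) ℝ →ₗ[ℝ] Matrix (Fin 2) (Fin 2) ℝ) ∧
            ∀ w : Matrix (Fin 2) (Fin 2) ℝ,
              (LinearMap.id - Lσ :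
                  Matrix (Fin 2) (Fin 2) ℝ →ₗ[ℝ] Matrix (Fin 2) (Fin 2) ℝ) w =
                  Pj * ρ₀ * Pj →
                (1 / p) * w.trace =
                  (N ^ 2 * p ^ 2 - 16 * N * p + 16 * N + 16 * p - 16) /
                    (4 * N * p * (2 - p)) := by
  obtain rfl : Pj = Matrix.single 0 0 1 := hPj.trans single_zero_zero_one_eq_of.symm
  subst hG hv hρ₀
  exact grover_generalizedHittingTime_geometric_general hN hγ hp0.ne' (by linarith) hE
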